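/- arXiv:math/0412064 — 2 statements merged into one kernel-verified Lean document; each statement's English description precedes it below -/
import Mathlib

section
/- Let n ≥ 1 and 1 ≤ k ≤ n be integers, λ ∈ ℂ, ω ∈ ℝ^k, and set s := λ − k/2. Let u : (0,∞) × ℝ^{n−k} → ℂ be twice continuously differentiable, and define F : (0,∞) × ℝ^{n−k} × ℝ^k → ℂ by F(x,y,z) := x^{k/2} e^{i⟨ω,z⟩} u(x,y). Then for all (x,y,z): −x² (∂ₓ²F + Σ_{j=1}^{n−k} ∂²_{y_j}F + Σ_{l=1}^{k} ∂²_{z_l}F) + (n−1) x ∂ₓF − λ(n−λ) F = x^{k/2} e^{i⟨ω,z⟩} ( −x² ∂ₓ²u + (n−k−1) x ∂ₓu − x² Σ_{j=1}^{n−k} ∂²_{y_j}u + x² ‖ω‖² u − s(n−k−s) u ). -/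
open scoped BigOperators

/-!
Write `F = x^a e^{i⟨ω,z⟩} u` with `a = k/2`. The Leibniz rule gives
`∂ₓF = x^a e^{i⟨ω,z⟩} (∂ₓu + a u / x)` and
`∂ₓ²F = x^a e^{i⟨ω,z⟩} (∂ₓ²u + 2a ∂ₓu / x + a(a-1) u / x²)` (`deriv_rpow_mul`,
`deriv_deriv_rpow_mul`). The prefactor does not depend on `y`, so it passes through each `∂²_{y_j}`,
and `∂²_{z_l}` multiplies the Fourier mode by `-ω_l²` (`deriv_deriv_mode`). The coefficient of
`∂ₓu` then becomes `(n-1-2a)x = (n-k-1)x`, while the zeroth-order terms combine through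
`a(n-a) - λ(n-λ) = -(λ-a)(n-2a-(λ-a)) = -s(n-k-s)`.
-/

lemma hasDerivAt_rpow_ofReal (a : ℝ) {x : ℝ} (hx : 0 < x) :
    HasDerivAt (fun t : ℝ => ((t ^ a : ℝ) : ℂ)) ((x ^ a : ℝ) * (a / x)) x := by
  have h := (Real.hasDerivAt_rpow_const (p := a) (Or.inl hx.ne')).ofReal_comp
  convert h using 1
  rw [Real.rpow_sub_one hx.ne']
  push_cast
  ring

lemma deriv_rpow_mul (a : ℝ) (c : ℂ) {g : ℝ → ℂ} {x : ℝ} (hx : 0 < x)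
    (hg : DifferentiableAt ℝ g x) :
    deriv (fun t : ℝ => ((t ^ a : ℝ) : ℂ) * c * g t) x
      = ((x ^ a : ℝ) : ℂ) * c * (deriv g x + a / x * g x) := by
  rw [(((hasDerivAt_rpow_ofReal a hx).mul_const c).fun_mul hg.hasDerivAt).deriv]
  ring

lemma deriv_deriv_rpow_mul (a : ℝ) (c : ℂ) {g : ℝ → ℂ} (hg : ContDiffOn ℝ 2 g (Set.Ioi 0))
    {x : ℝ} (hx : 0 < x) :
    deriv (deriv (fun t : ℝ => ((t ^ a : ℝ) : ℂ) * c * g t)) x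
      = ((x ^ a : ℝ) : ℂ) * c *
        (deriv (deriv g) x + 2 * a / x * deriv g x + a * (a - 1) / x ^ 2 * g x) := by
  have hd : ∀ t : ℝ, 0 < t → DifferentiableAt ℝ g t := fun t ht =>
    (hg.differentiableOn (by norm_num)).differentiableAt (Ioi_mem_nhds ht)
  have hg' : DifferentiableAt ℝ (deriv g) x :=
    ((hg.deriv_of_isOpen (m := 1) isOpen_Ioi (by norm_num)).differentiableOn
      (by norm_num)).differentiableAt (Ioi_mem_nhds hx)
  -- The first-derivative formula holds on a neighbourhood of `x`, so it may be differentiated.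
  have he : deriv (fun t : ℝ => ((t ^ a : ℝ) : ℂ) * c * g t) =ᶠ[nhds x]
      fun t : ℝ => ((t ^ a : ℝ) : ℂ) * c * (deriv g t + a * (t : ℂ)⁻¹ * g t) := by
    filter_upwards [Ioi_mem_nhds hx] with t ht
    rw [deriv_rpow_mul a c ht (hd t ht), div_eq_mul_inv]
  have hxc : (x : ℂ) ≠ 0 := by exact_mod_cast hx.ne'
  have hinv : HasDerivAt (fun t : ℝ => (t : ℂ)⁻¹) (-((x : ℂ) ^ 2)⁻¹) x :=
    (hasDerivAt_inv hxc).comp_ofReal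
  rw [he.deriv_eq, (((hasDerivAt_rpow_ofReal a hx).mul_const c).fun_mul
    (hg'.hasDerivAt.fun_add ((hinv.const_mul (a : ℂ)).fun_mul (hd x hx).hasDerivAt))).deriv]
  field_simp
  ring

lemma sum_mul_update {k : ℕ} (ω z : Fin k → ℝ) (l : Fin k) (t : ℝ) :
    ∑ i, ω i * Function.update z l t i = ∑ i, ω i * z i + ω l * (t - z l) := by
  rw [← sub_eq_iff_eq_add', ← Finset.sum_sub_distrib, Finset.sum_eq_single l]
  · simp [mul_sub]
  · intro i _ hi
    simp [Function.update_of_ne hi]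
  · simp

lemma deriv_deriv_mode {k : ℕ} (ω z : Fin k → ℝ) (l : Fin k) (b v : ℂ) :
    deriv (deriv (fun t : ℝ =>
        b * Complex.exp (Complex.I * ((∑ i, ω i * Function.update z l t i : ℝ) : ℂ)) * v)) (z l)
      = -(ω l : ℂ) ^ 2 *
        (b * Complex.exp (Complex.I * ((∑ i, ω i * z i : ℝ) : ℂ)) * v) := by
  have h : ∀ (d : ℂ) (t : ℝ), HasDerivAt (fun t : ℝ =>
      d * Complex.exp (Complex.I * ((∑ i, ω i * Function.update z l t i : ℝ) : ℂ)) * v)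
      ((d * (Complex.I * ω l)) *
        Complex.exp (Complex.I * ((∑ i, ω i * Function.update z l t i : ℝ) : ℂ)) * v) t := by
    intro d t
    simp only [sum_mul_update]
    have h1 : HasDerivAt (fun t : ℝ => ∑ i, ω i * z i + ω l * (t - z l)) (ω l) t := by
      simpa using (((hasDerivAt_id t).sub_const (z l)).const_mul (ω l)).const_add (∑ i, ω i * z i)
    refine (((h1.ofReal_comp.const_mul Complex.I).cexp.const_mul d).mul_const v).congr_deriv ?_
    ring
  rw [funext fun t => (h b t).deriv, (h _ _).deriv, Function.update_eq_self]
  linear_combination b * ω l ^ 2 *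
    Complex.exp (Complex.I * ((∑ i, ω i * z i : ℝ) : ℂ)) * v * Complex.I_sq

/-- Conjugating the shifted hyperbolic Laplacian `Δ - λ(n-λ)` on the half-space model of
`ℍ^{n+1}` by `x^{k/2}` and restricting to the Fourier mode `e^{i⟨ω,z⟩}` yields the operator
`P(λ) = -x²∂ₓ² + (n-k-1)x∂ₓ - x²Δ_y + x²‖ω‖² - s(n-k-s)` with `s = λ - k/2`. -/
theorem conjugated_laplacian_identity (n k : ℕ) (hn : 1 ≤ n) (hk1 : 1 ≤ k) (hkn : k ≤ n)
    (lam : ℂ) (ω : Fin k → ℝ) (u : ℝ → (Fin (n - k) → ℝ) → ℂ)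
    (hu : ContDiffOn ℝ 2 (fun p : ℝ × (Fin (n - k) → ℝ) => u p.1 p.2)
      (Set.Ioi (0 : ℝ) ×ˢ Set.univ)) :
    ∀ x : ℝ, 0 < x → ∀ y : Fin (n - k) → ℝ, ∀ z : Fin k → ℝ,
      let s : ℂ := lam - (k : ℂ) / 2
      let F : ℝ → (Fin (n - k) → ℝ) → (Fin k → ℝ) → ℂ := fun x y z =>
        ((x ^ ((k : ℝ) / 2) : ℝ) : ℂ) *
          Complex.exp (Complex.I * ((∑ l, ω l * z l : ℝ) : ℂ)) * u x y
      (-(x : ℂ) ^ 2 *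
            (deriv (deriv (fun x' => F x' y z)) x
              + (∑ j, deriv (deriv (fun t => F x (Function.update y j t) z)) (y j))
              + (∑ l, deriv (deriv (fun t => F x y (Function.update z l t))) (z l)))
          + ((n : ℂ) - 1) * (x : ℂ) * deriv (fun x' => F x' y z) x
          - lam * ((n : ℂ) - lam) * F x y z)
        = ((x ^ ((k : ℝ) / 2) : ℝ) : ℂ) *
            Complex.exp (Complex.I * ((∑ l, ω l * z l : ℝ) : ℂ)) *
            (-(x : ℂ) ^ 2 * deriv (deriv (fun x' => u x' y)) x
              + ((n : ℂ) - (k : ℂ) - 1) * (x : ℂ) * deriv (fun x' => u x' y) x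
              - (x : ℂ) ^ 2 *
                  (∑ j, deriv (deriv (fun t => u x (Function.update y j t))) (y j))
              + (x : ℂ) ^ 2 * ((∑ l, (ω l) ^ 2 : ℝ) : ℂ) * u x y
              - s * ((n : ℂ) - (k : ℂ) - s) * u x y) := by
  intro x hx y z s F
  have hg : ContDiffOn ℝ 2 (fun t => u t y) (Set.Ioi 0) :=
    hu.comp (f := fun t : ℝ => (t, y)) (contDiff_id.prodMk contDiff_const).contDiffOn
      fun t ht => ⟨ht, Set.mem_univ _⟩
  have hd : DifferentiableAt ℝ (fun t => u t y) x :=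
    (hg.differentiableOn (by norm_num)).differentiableAt (Ioi_mem_nhds hx)
  have hxc : (x : ℂ) ≠ 0 := by exact_mod_cast hx.ne'
  simp only [F, s]
  rw [deriv_rpow_mul _ _ hx hd, deriv_deriv_rpow_mul _ _ hg hx]
  -- Constants pull out of `deriv` with no differentiability assumption, which handles `Δ_y`.
  simp only [deriv_deriv_mode, deriv_const_mul_field', deriv_const_mul_field, ← Finset.mul_sum,
    ← Finset.sum_mul, Finset.sum_neg_distrib]
  push_cast
  field_simp
  ring
end

section
/- There exists a universal constant C > 0 such that for all integers N ≥ d ≥ 1 and every real Λ ≥ 0, the series ∑_{l=1}^∞ log(1 + Λ^{2N} l^{−2N/d}) converges and ∑_{l=1}^∞ log(1 + Λ^{2N} l^{−2N/d}) ≤ C N Λ^d. -/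
/-!
Put `x = Λ ^ d`, `p = N / d ≥ 1` and `n = l + 1`. Each term equals `log (1 + ((x / n) ^ 2) ^ p)`,
and superadditivity of `s ↦ s ^ p` gives `1 + s ^ p ≤ (1 + s) ^ p`, so the term is at most
`p * log (1 + (x / n) ^ 2) ≤ N * log (1 + (x / n) ^ 2)`. This reduces everything to the exponent
`2`, where Euler's product `∏ (1 + x ^ 2 / n ^ 2) = sinh (π x) / (π x) ≤ exp (π x)` replaces the
comparison with an integral: all partial sums are at most `N * π * x`, so `C = π` works.
-/

theorem sinh_le_mul_exp (u : ℝ) : Real.sinh u ≤ u * Real.exp u := by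
  have h := Real.add_one_le_exp (-2 * u)
  have h2 : Real.exp (-u) = Real.exp (-2 * u) * Real.exp u := by
    rw [← Real.exp_add]; congr 1; ring
  rw [Real.sinh_eq, h2]
  nlinarith [Real.exp_pos u]

/-- Euler's sine product at the imaginary point `x * I`. -/
theorem tendsto_euler_sinh_prod (x : ℝ) (hx : 0 ≤ x) :
    Filter.Tendsto
      (fun n : ℕ => Real.pi * x * ∏ j ∈ Finset.range n, (1 + (x / ((j : ℝ) + 1)) ^ 2))
      Filter.atTop (nhds (Real.sinh (Real.pi * x))) := by
  have h := (Complex.tendsto_euler_sin_prod ((x : ℂ) * Complex.I)).norm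
  have hs : ‖Complex.sin (Real.pi * ((x : ℂ) * Complex.I))‖ = Real.sinh (Real.pi * x) := by
    rw [← mul_assoc, Complex.sin_mul_I, norm_mul, Complex.norm_I, mul_one,
      ← Complex.ofReal_mul, ← Complex.ofReal_sinh, Complex.norm_real, Real.norm_eq_abs,
      abs_of_nonneg (Real.sinh_nonneg_iff.2 (by positivity))]
  rw [hs] at h
  refine h.congr fun n => ?_
  rw [norm_mul, norm_prod, norm_mul, norm_mul, Complex.norm_I, Complex.norm_real,
    Complex.norm_real, Real.norm_of_nonneg Real.pi_pos.le, Real.norm_of_nonneg hx, mul_one]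
  congr 1
  refine Finset.prod_congr rfl fun j _ => ?_
  have : (1 : ℂ) - ((x : ℂ) * Complex.I) ^ 2 / ((j : ℂ) + 1) ^ 2
      = ((1 + (x / ((j : ℝ) + 1)) ^ 2 : ℝ) : ℂ) := by
    push_cast
    rw [mul_pow, Complex.I_sq, div_pow]; ring
  rw [this, Complex.norm_real, Real.norm_of_nonneg (by positivity)]

theorem sum_log_one_add_sq_le (x : ℝ) (hx : 0 ≤ x) (n : ℕ) :
    ∑ j ∈ Finset.range n, Real.log (1 + (x / ((j : ℝ) + 1)) ^ 2) ≤ Real.pi * x := by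
  rcases hx.eq_or_lt with rfl | hx0
  · simp
  have hpx : 0 < Real.pi * x := by positivity
  have hmono : Monotone
      (fun n : ℕ => Real.pi * x * ∏ j ∈ Finset.range n, (1 + (x / ((j : ℝ) + 1)) ^ 2)) := by
    refine monotone_nat_of_le_succ fun m => ?_
    rw [Finset.prod_range_succ]
    refine mul_le_mul_of_nonneg_left (le_mul_of_one_le_right ?_ ?_) hpx.le
    · exact Finset.prod_nonneg fun j _ => by positivity
    · exact le_add_of_nonneg_right (by positivity)
  have h := (hmono.ge_of_tendsto (tendsto_euler_sinh_prod x hx) n).trans (sinh_le_mul_exp _)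
  have h' := le_of_mul_le_mul_left h hpx
  rw [← Real.log_prod fun j _ => by positivity]
  exact (Real.log_le_iff_le_exp (Finset.prod_pos fun j _ => by positivity)).2 h'

/-- Reduction of the exponent `2 * N / d` to the exponent `2`, at the cost of a factor `N`. -/
theorem term_le (N d : ℕ) (hd : 1 ≤ d) (hN : d ≤ N) (Λ : ℝ) (hΛ : 0 ≤ Λ) (l : ℕ) :
    Real.log (1 + Λ ^ (2 * N) * ((l : ℝ) + 1) ^ (-(2 * (N : ℝ) / d)))
      ≤ N * Real.log (1 + (Λ ^ d / ((l : ℝ) + 1)) ^ 2) := by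
  have hd0 : (1 : ℝ) ≤ d := by exact_mod_cast hd
  have hdpos : (0 : ℝ) < d := by linarith
  have hNd : (d : ℝ) ≤ N := by exact_mod_cast hN
  have hl : (0 : ℝ) < (l : ℝ) + 1 := by positivity
  have hp : (1 : ℝ) ≤ (N : ℝ) / d := (one_le_div hdpos).2 hNd
  have hpN : (N : ℝ) / d ≤ N := div_le_self (by positivity) hd0
  set s : ℝ := (Λ ^ d / ((l : ℝ) + 1)) ^ 2 with hs
  have hs0 : 0 ≤ s := by positivity
  have key : Λ ^ (2 * N) * ((l : ℝ) + 1) ^ (-(2 * (N : ℝ) / d)) = s ^ ((N : ℝ) / d) := by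
    rw [hs, div_pow, Real.div_rpow (by positivity) (by positivity), Real.rpow_neg hl.le,
      ← div_eq_mul_inv, ← pow_mul]
    congr 1
    · rw [← Real.rpow_natCast Λ (d * 2), ← Real.rpow_mul hΛ, ← Real.rpow_natCast]
      congr 1
      push_cast
      field_simp
    · rw [← Real.rpow_natCast ((l : ℝ) + 1) 2, ← Real.rpow_mul hl.le]
      congr 1
      push_cast
      ring
  have hsup : 1 + s ^ ((N : ℝ) / d) ≤ (1 + s) ^ ((N : ℝ) / d) := by
    simpa using Real.add_rpow_le_rpow_add zero_le_one hs0 hp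
  rw [key]
  calc Real.log (1 + s ^ ((N : ℝ) / d)) ≤ Real.log ((1 + s) ^ ((N : ℝ) / d)) :=
        Real.log_le_log (by positivity) hsup
    _ = (N : ℝ) / d * Real.log (1 + s) := Real.log_rpow (by positivity) _
    _ ≤ N * Real.log (1 + s) :=
        mul_le_mul_of_nonneg_right hpN (Real.log_nonneg (by linarith))

/-- There is a universal `C > 0` such that for all integers `N ≥ d ≥ 1` and all `Λ ≥ 0`,
the series `∑_{l≥1} log(1 + Λ^{2N} l^{-2N/d})` converges and is bounded by `C N Λ^d`. -/
theorem log_det_sum_bound :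
    ∃ C > 0, ∀ N d : ℕ, 1 ≤ d → d ≤ N → ∀ Λ : ℝ, 0 ≤ Λ →
      Summable (fun l : ℕ =>
        Real.log (1 + Λ ^ (2 * N) * ((l : ℝ) + 1) ^ (-(2 * (N : ℝ) / d)))) ∧
      (∑' l : ℕ, Real.log (1 + Λ ^ (2 * N) * ((l : ℝ) + 1) ^ (-(2 * (N : ℝ) / d))))
        ≤ C * N * Λ ^ d := by
  refine ⟨Real.pi, Real.pi_pos, fun N d hd hN Λ hΛ => ?_⟩
  have hnn : ∀ l : ℕ,
      0 ≤ Real.log (1 + Λ ^ (2 * N) * ((l : ℝ) + 1) ^ (-(2 * (N : ℝ) / d))) :=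
    fun l => Real.log_nonneg (le_add_of_nonneg_right (by positivity))
  have hb : ∀ n : ℕ, ∑ l ∈ Finset.range n,
      Real.log (1 + Λ ^ (2 * N) * ((l : ℝ) + 1) ^ (-(2 * (N : ℝ) / d)))
        ≤ Real.pi * N * Λ ^ d := by
    intro n
    calc _ ≤ ∑ l ∈ Finset.range n, N * Real.log (1 + (Λ ^ d / ((l : ℝ) + 1)) ^ 2) :=
          Finset.sum_le_sum fun l _ => term_le N d hd hN Λ hΛ l
      _ = N * ∑ l ∈ Finset.range n, Real.log (1 + (Λ ^ d / ((l : ℝ) + 1)) ^ 2) :=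
          (Finset.mul_sum _ _ _).symm
      _ ≤ N * (Real.pi * Λ ^ d) :=
          mul_le_mul_of_nonneg_left (sum_log_one_add_sq_le _ (by positivity) n) (by positivity)
      _ = Real.pi * N * Λ ^ d := by ring
  exact ⟨summable_of_sum_range_le hnn hb, Real.tsum_le_of_sum_range_le hnn hb⟩
end
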